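/- Let F be an algebraically closed field of characteristic ≠ 2 and n ≥ 1. Let g ∈ GL_{2n}(F((u))) be such that gᵀ·J̃_{2n}·g = c·J̃_{2n} for some c ∈ F((u))^× and such that g·Λ̃_i = Λ̃_i for all i ∈ ℤ. Then c ∈ F[[u]]^×, and there exists a scalar x ∈ F[[u]]^× such that h = x^{-1}·g satisfies hᵀ·J̃_{2n}·h = J̃_{2n} and h·Λ̃_i = Λ̃_i for all i ∈ ℤ. In other words, I_GSp(F) = F[[u]]^×·I_Sp(F), where I_GSp(F) (resp. I_Sp(F)) denotes the group of symplectic similitudes (resp. symplectic matrices) in GL_{2n}(F((u))) stabilizing each member of the standard lattice chain. -/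

import Mathlib

noncomputable section
namespace Pap

variable (R : Type*) [CommRing R]

/-- `u^m` as a Laurent series. -/
def U (m : ℤ) : LaurentSeries R := HahnSeries.single m 1

/-- `R[[u]]` as a `R[[u]]`-submodule of `R((u))`. -/
def psRange : Submodule (PowerSeries R) (LaurentSeries R) :=
  LinearMap.range (Algebra.linearMap (PowerSeries R) (LaurentSeries R))

variable (n : ℕ)

/-- `R((u))^n`. -/
abbrev V := Fin n → LaurentSeries R

instance (priority := 10000) : AddCommGroup (V R n) := Pi.addCommGroup
instance (priority := 10000) : Module (PowerSeries R) (V R n) := Pi.module _ _ _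
instance (priority := 10000) : Module (LaurentSeries R) (V R n) := Pi.module _ _ _

/-- Multiplication by a Laurent series, as an `R[[u]]`-linear endomorphism of `R((u))^n`. -/
def smulV (a : LaurentSeries R) : V R n →ₗ[PowerSeries R] V R n where
  toFun x := a • x
  map_add' x y := smul_add a x y
  map_smul' c x := by
    funext i
    change a * (c • x i) = c • (a * x i)
    simp only [Algebra.smul_def]
    ring

/-- Image of a submodule under multiplication by a Laurent series. -/
def scaleL (a : LaurentSeries R) (L : Submodule (PowerSeries R) (V R n)) :
    Submodule (PowerSeries R) (V R n) := L.map (smulV R n a)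

/-- The standard lattice `R[[u]]^n`. -/
def stdLat : Submodule (PowerSeries R) (V R n) := Submodule.pi Set.univ fun _ => psRange R

/-- The quotient `B/(A ∩ B)`; for `A ≤ B` this is `B/A`. -/
abbrev subQuot (A B : Submodule (PowerSeries R) (V R n)) :=
  B ⧸ (A.comap B.subtype)

/-- A lattice in `R((u))^n`. -/
def IsLattice (L : Submodule (PowerSeries R) (V R n)) : Prop :=
  ∃ N : ℕ, scaleL R n (U R N) (stdLat R n) ≤ L ∧ L ≤ scaleL R n (U R (-(N : ℤ))) (stdLat R n) ∧
    Module.Finite R (RestrictScalars R (PowerSeries R)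
      (subQuot R n L (scaleL R n (U R (-(N : ℤ))) (stdLat R n)))) ∧
    Module.Projective R (RestrictScalars R (PowerSeries R)
      (subQuot R n L (scaleL R n (U R (-(N : ℤ))) (stdLat R n))))

/-- Rank one finite locally free module. -/
def RankOne (A : Type*) [CommRing A] (Q : Type*) [AddCommGroup Q] [Module A Q] : Prop :=
  Module.Finite A Q ∧ Module.Projective A Q ∧
    ∀ (P : Ideal A) [P.IsPrime],
      Module.finrank (Localization P.primeCompl) (LocalizedModule P.primeCompl Q) = 1

/-- Exponent of `u` bounding the `t`-th coordinate of the `j`-th standard lattice. -/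
def dex (j : ℤ) (t : Fin n) : ℤ := (j - ((t : ℤ) + 1)) / n + 1

/-- The standard lattice chain `Λ̃_j`, `j ∈ ℤ`. -/
def stdChain (j : ℤ) : Submodule (PowerSeries R) (V R n) :=
  Submodule.span (PowerSeries R)
    (Set.range fun t : Fin n =>
      (fun s => if s = t then U R (-(dex n j t)) else 0 : V R n))

/-- A complete periodic lattice chain in `R((u))^n`. -/
def IsLatticeChain (L : ℤ → Submodule (PowerSeries R) (V R n)) : Prop :=
  (∀ i, IsLattice R n (L i)) ∧ (∀ i, L i ≤ L (i + 1)) ∧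
    (∀ i, @RankOne R _ (RestrictScalars R (PowerSeries R) (subQuot R n (L i) (L (i + 1)))) _
      (RestrictScalars.module R (PowerSeries R) (subQuot R n (L i) (L (i + 1))) :)) ∧
    (∀ i, L ((n : ℤ) + i) = scaleL R n (U R (-1)) (L i))

/-- The action of an invertible matrix over `R((u))` on `R[[u]]`-submodules of `R((u))^n`. -/
def glLat (g : GL (Fin n) (LaurentSeries R)) (L : Submodule (PowerSeries R) (V R n)) :
    Submodule (PowerSeries R) (V R n) :=
  L.map ((Matrix.mulVecLin (g : Matrix (Fin n) (Fin n) (LaurentSeries R))).restrictScalars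
    (PowerSeries R))

/-- The symplectic matrix `J̃_{2n}`. -/
def Jt : Matrix (Fin (2 * n)) (Fin (2 * n)) (LaurentSeries R) :=
  Matrix.of fun i j =>
    if (i : ℕ) + (j : ℕ) = 2 * n - 1 then (if (i : ℕ) < n then 1 else -1) else 0

/-- The image of an `R[[u]]`-submodule of `R((u))^n` under a matrix over `R((u))`. -/
def matLat (x : Matrix (Fin n) (Fin n) (LaurentSeries R))
    (L : Submodule (PowerSeries R) (V R n)) : Submodule (PowerSeries R) (V R n) :=
  L.map ((Matrix.mulVecLin x).restrictScalars (PowerSeries R))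

end Pap
end

/-!
A similitude stabilizing `Λ̃_0 = R[[u]]^{2n}` lies, together with its inverse, in the matrices over
`R[[u]]`, so comparing one entry equal to `1` in `gᵀ J̃ g = c J̃`, and in the same identity for
`g⁻¹`, puts `c` and `c⁻¹` in `R[[u]]`. When `2` is invertible and every unit of `R` is a square,
Hensel's lemma for the `u`-adically complete ring `R[[u]]` gives `c = x²` with `x ∈ R[[u]]^×`. Then
`x⁻¹ g` is symplectic, and it has the same effect as `g` on every `R[[u]]`-submodule.
-/

namespace Pap

open scoped Matrix PowerSeries LaurentSeries

section Similitude

variable {ι K : Type*} [Fintype ι] [CommRing K] {J A : Matrix ι ι K} {c : K}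

/-- `A` is a similitude, with factor `c`, of the bilinear form with Gram matrix `J`. The factor is
a parameter because `J` may be zero, in which case it is not determined by `A`. -/
def IsSimilitude (J A : Matrix ι ι K) (c : K) : Prop := Aᵀ * J * A = c • J

theorem IsSimilitude.smul (h : IsSimilitude J A c) (x : K) :
    IsSimilitude J (x • A) (x * x * c) := by
  unfold IsSimilitude at h ⊢
  rw [Matrix.transpose_smul, Matrix.smul_mul, Matrix.smul_mul, Matrix.mul_smul, h, smul_smul,
    smul_smul, mul_assoc]

theorem IsSimilitude.inv [DecidableEq ι] {g : GL ι K} {c : Kˣ}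
    (h : IsSimilitude J (g : Matrix ι ι K) c) :
    IsSimilitude J ((g⁻¹ : GL ι K) : Matrix ι ι K) ((c⁻¹ : Kˣ) : K) := by
  set B : Matrix ι ι K := ((g⁻¹ : GL ι K) : Matrix ι ι K)
  have hgB : (g : Matrix ι ι K) * B = 1 := g.mul_inv
  have hBg : Bᵀ * (g : Matrix ι ι K)ᵀ = 1 := by
    rw [← Matrix.transpose_mul, hgB, Matrix.transpose_one]
  calc
    Bᵀ * J * B = ((c⁻¹ : Kˣ) : K) • (Bᵀ * ((c : K) • J) * B) := by
      rw [Matrix.mul_smul, Matrix.smul_mul, smul_smul, Units.inv_mul, one_smul]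
    _ = ((c⁻¹ : Kˣ) : K) • ((Bᵀ * (g : Matrix ι ι K)ᵀ) * J * ((g : Matrix ι ι K) * B)) := by
      rw [← h]
      simp only [Matrix.mul_assoc]
    _ = ((c⁻¹ : Kˣ) : K) • J := by rw [hBg, hgB, Matrix.one_mul, Matrix.mul_one]

theorem IsSimilitude.factor_mem [DecidableEq ι] {S : Subring K} (h : IsSimilitude J A c)
    (hJ : J ∈ S.matrix) (hA : A ∈ S.matrix) {i j : ι} (hij : J i j = 1) : c ∈ S := by
  have hmem : Aᵀ * J * A ∈ S.matrix :=
    mul_mem (mul_mem (fun k l => hA l k : Aᵀ ∈ S.matrix) hJ) hA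
  have hc : (Aᵀ * J * A) i j = c := by rw [h, Matrix.smul_apply, hij, smul_eq_mul, mul_one]
  exact hc ▸ hmem i j

end Similitude

theorem isSquare_of_isSquare_mk {A : Type*} [CommRing A] (I : Ideal A) [HenselianRing A I]
    (h2 : IsUnit (2 : A)) {d : A} (hd : IsUnit d) (h : IsSquare (Ideal.Quotient.mk I d)) :
    IsSquare d := by
  obtain ⟨s', hs'⟩ := h
  obtain ⟨s, rfl⟩ := Ideal.Quotient.mk_surjective s'
  have hs : IsUnit (Ideal.Quotient.mk I s) :=
    isUnit_of_mul_isUnit_left (hs' ▸ hd.map (Ideal.Quotient.mk I))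
  obtain ⟨y, hy, -⟩ := HenselianRing.is_henselian (I := I)
    (Polynomial.X ^ 2 - Polynomial.C d) (Polynomial.monic_X_pow_sub_C d two_ne_zero) s
    (by
      rw [← Ideal.Quotient.eq_zero_iff_mem]
      simp [hs', pow_two])
    (by simpa [one_add_one_eq_two] using (h2.map (Ideal.Quotient.mk I)).mul hs)
  refine ⟨y, ?_⟩
  simpa [Polynomial.IsRoot, sub_eq_zero, pow_two, eq_comm] using hy

variable {R : Type*} [CommRing R]

theorem isSquare_powerSeries_of_isSquare_constantCoeff (h2 : IsUnit (2 : R)) {d : R⟦X⟧}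
    (hd : IsUnit d) (hsq : IsSquare (PowerSeries.constantCoeff d)) : IsSquare d := by
  obtain ⟨s, hs⟩ := hsq
  refine isSquare_of_isSquare_mk (Ideal.span {PowerSeries.X})
    (map_ofNat (PowerSeries.C (R := R)) 2 ▸ h2.map PowerSeries.C) hd
    ⟨Ideal.Quotient.mk _ (PowerSeries.C s), ?_⟩
  rw [← map_mul, ← map_mul, ← hs, Ideal.Quotient.eq, Ideal.mem_span_singleton,
    PowerSeries.X_dvd_iff]
  simp

theorem exists_units_map_eq {M N : Type*} [Monoid M] [Monoid N] {f : M →* N}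
    (hf : Function.Injective f) {c : Nˣ} (hc : (c : N) ∈ MonoidHom.mrange f)
    (hc' : ((c⁻¹ : Nˣ) : N) ∈ MonoidHom.mrange f) : ∃ d : Mˣ, Units.map f d = c := by
  obtain ⟨p, hp⟩ := hc
  obtain ⟨q, hq⟩ := hc'
  have hpq : p * q = 1 := hf (by rw [map_mul, hp, hq, Units.mul_inv, map_one])
  have hqp : q * p = 1 := hf (by rw [map_mul, hp, hq, Units.inv_mul, map_one])
  exact ⟨⟨p, q, hpq, hqp⟩, Units.ext hp⟩

theorem exists_units_eq_mul_self (h2 : IsUnit (2 : R)) (hsq : ∀ a : R, IsUnit a → IsSquare a)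
    {c : R⸨X⸩ˣ} (hc : (c : R⸨X⸩) ∈ psRange R) (hc' : ((c⁻¹ : R⸨X⸩ˣ) : R⸨X⸩) ∈ psRange R) :
    ∃ y : R⟦X⟧ˣ, c = Units.map (algebraMap R⟦X⟧ R⸨X⸩) y * Units.map (algebraMap R⟦X⟧ R⸨X⸩) y := by
  obtain ⟨d, rfl⟩ := exists_units_map_eq (f := (algebraMap R⟦X⟧ R⸨X⸩ : R⟦X⟧ →* R⸨X⸩))
    HahnSeries.ofPowerSeries_injective hc hc'
  obtain ⟨y, hy⟩ := isSquare_powerSeries_of_isSquare_constantCoeff h2 d.isUnit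
    (hsq _ (d.isUnit.map PowerSeries.constantCoeff))
  lift y to R⟦X⟧ˣ using isUnit_of_mul_isUnit_left (hy ▸ d.isUnit)
  exact ⟨y, by rw [← map_mul]; exact congrArg _ (Units.ext hy)⟩

/-- `psRange R`, that is `R[[u]]` inside `R((u))`, as a subring; it provides the subring
`(psSubring R).matrix` of matrices with entries in `R[[u]]`. -/
noncomputable abbrev psSubring (R : Type*) [CommRing R] : Subring R⸨X⸩ :=
  (algebraMap R⟦X⟧ R⸨X⸩).range

variable {m : ℕ}

theorem mem_stdLat_iff {v : V R m} : v ∈ stdLat R m ↔ ∀ i, v i ∈ psRange R := by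
  simp [stdLat, Submodule.mem_pi]

theorem single_one_mem_stdLat (j : Fin m) : (Pi.single j 1 : V R m) ∈ stdLat R m := by
  refine mem_stdLat_iff.2 fun i => ?_
  rw [Pi.single_apply]
  split_ifs
  exacts [one_mem (psSubring R), zero_mem _]

theorem dex_zero (t : Fin m) : dex m 0 t = 0 := by
  have ht := t.isLt
  have hdiv : (0 - ((t : ℤ) + 1)) / (m : ℤ) = -1 := by
    rw [Int.ediv_eq_iff_of_pos (by lia)]
    lia
  rw [dex, hdiv, neg_add_cancel]

theorem stdChain_zero : stdChain R m 0 = stdLat R m := by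
  have hbasis : (fun t s : Fin m => if s = t then U R (-(dex m 0 t)) else 0) =
      fun t => Pi.single t 1 := by
    funext t s
    simp only [dex_zero, neg_zero, Pi.single_apply]
    rfl
  rw [stdChain, hbasis]
  apply le_antisymm
  · rw [Submodule.span_le]
    rintro _ ⟨t, rfl⟩
    exact single_one_mem_stdLat t
  · intro v hv
    choose p hp using mem_stdLat_iff.1 hv
    have hsum : v = ∑ t, p t • (Pi.single t 1 : V R m) := by
      funext s
      simp [Finset.sum_apply, Pi.single_apply, ← hp, Algebra.smul_def]
    rw [hsum]
    exact Submodule.sum_smul_mem _ _ fun t _ => Submodule.subset_span ⟨t, rfl⟩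

theorem matLat_one (L : Submodule R⟦X⟧ (V R m)) : matLat R m 1 L = L := by
  ext v
  simp [matLat]

theorem matLat_mul (A B : Matrix (Fin m) (Fin m) R⸨X⸩) (L : Submodule R⟦X⟧ (V R m)) :
    matLat R m (A * B) L = matLat R m A (matLat R m B L) := by
  ext v
  simp [matLat]

theorem glLat_inv_eq {g : GL (Fin m) R⸨X⸩} {L L' : Submodule R⟦X⟧ (V R m)}
    (h : glLat R m g L = L') : glLat R m g⁻¹ L' = L := by
  subst h
  change matLat R m _ (matLat R m _ L) = L
  rw [← matLat_mul, Units.inv_mul, matLat_one]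

theorem matLat_algebraMap_smul_le (p : R⟦X⟧) (A : Matrix (Fin m) (Fin m) R⸨X⸩)
    (L : Submodule R⟦X⟧ (V R m)) :
    matLat R m (algebraMap R⟦X⟧ R⸨X⸩ p • A) L ≤ matLat R m A L := by
  rintro _ ⟨v, hv, rfl⟩
  have hsmul : (algebraMap R⟦X⟧ R⸨X⸩ p • A) *ᵥ v = p • A *ᵥ v := by
    rw [Matrix.smul_mulVec]
    funext i
    exact (Algebra.smul_def p ((A *ᵥ v) i)).symm
  change (algebraMap R⟦X⟧ R⸨X⸩ p • A) *ᵥ v ∈ _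
  rw [hsmul]
  exact Submodule.smul_mem _ p ⟨v, hv, rfl⟩

theorem matLat_unit_smul (p : R⟦X⟧ˣ) (A : Matrix (Fin m) (Fin m) R⸨X⸩)
    (L : Submodule R⟦X⟧ (V R m)) :
    matLat R m (algebraMap R⟦X⟧ R⸨X⸩ p • A) L = matLat R m A L := by
  refine (matLat_algebraMap_smul_le _ A L).antisymm ?_
  calc
    matLat R m A L
        = matLat R m (algebraMap R⟦X⟧ R⸨X⸩ ↑p⁻¹ • algebraMap R⟦X⟧ R⸨X⸩ p • A) L := by
      rw [smul_smul, ← map_mul, Units.inv_mul, map_one, one_smul]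
    _ ≤ matLat R m (algebraMap R⟦X⟧ R⸨X⸩ p • A) L := matLat_algebraMap_smul_le _ _ L

theorem mem_matrix_of_matLat_stdLat_le {A : Matrix (Fin m) (Fin m) R⸨X⸩}
    (h : matLat R m A (stdLat R m) ≤ stdLat R m) : A ∈ (psSubring R).matrix := by
  intro i j
  have hcol : A *ᵥ Pi.single j 1 ∈ stdLat R m := h ⟨_, single_one_mem_stdLat j, rfl⟩
  rw [Matrix.mulVec_single_one] at hcol
  exact mem_stdLat_iff.1 hcol i

theorem Jt_mem_matrix (n : ℕ) : Jt R n ∈ (psSubring R).matrix := by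
  intro i j
  change Jt R n i j ∈ psSubring R
  simp only [Jt, Matrix.of_apply]
  split_ifs
  exacts [one_mem _, neg_mem (one_mem _), zero_mem _]

theorem Jt_first_last {n : ℕ} (hn : 1 ≤ n) :
    Jt R n ⟨0, by lia⟩ ⟨2 * n - 1, by lia⟩ = 1 := by
  simp [Jt, Nat.pos_iff_ne_zero.1 hn]

end Pap

open Pap Matrix in
theorem stmt9_general (R : Type*) [CommRing R] (h2 : IsUnit (2 : R))
    (hsq : ∀ a : R, IsUnit a → IsSquare a)
    (n : ℕ) (hn : 1 ≤ n) (g : GL (Fin (2 * n)) (LaurentSeries R)) (c : (LaurentSeries R)ˣ)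
    (hc : (g : Matrix (Fin (2 * n)) (Fin (2 * n)) (LaurentSeries R))ᵀ * Jt R n *
        (g : Matrix (Fin (2 * n)) (Fin (2 * n)) (LaurentSeries R))
      = (c : LaurentSeries R) • Jt R n)
    (hstab : glLat R (2 * n) g (stdChain R (2 * n) 0) = stdChain R (2 * n) 0) :
    ((c : LaurentSeries R) ∈ psRange R ∧
      ((c⁻¹ : (LaurentSeries R)ˣ) : LaurentSeries R) ∈ psRange R) ∧
    ∃ x : (LaurentSeries R)ˣ,
      ((x : LaurentSeries R) ∈ psRange R ∧
        ((x⁻¹ : (LaurentSeries R)ˣ) : LaurentSeries R) ∈ psRange R) ∧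
      (((x⁻¹ : (LaurentSeries R)ˣ) : LaurentSeries R) •
            (g : Matrix (Fin (2 * n)) (Fin (2 * n)) (LaurentSeries R)))ᵀ * Jt R n *
          (((x⁻¹ : (LaurentSeries R)ˣ) : LaurentSeries R) •
            (g : Matrix (Fin (2 * n)) (Fin (2 * n)) (LaurentSeries R)))
        = Jt R n ∧
      ∀ L : Submodule (PowerSeries R) (V R (2 * n)),
        matLat R (2 * n)
          (((x⁻¹ : (LaurentSeries R)ˣ) : LaurentSeries R) •
            (g : Matrix (Fin (2 * n)) (Fin (2 * n)) (LaurentSeries R))) L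
          = glLat R (2 * n) g L := by
  rw [stdChain_zero] at hstab
  have hsim : IsSimilitude (Jt R n) (g : Matrix _ _ (LaurentSeries R)) c := hc
  have hcu : (c : LaurentSeries R) ∈ psRange R :=
    hsim.factor_mem (Jt_mem_matrix n) (mem_matrix_of_matLat_stdLat_le hstab.le) (Jt_first_last hn)
  have hcu' : ((c⁻¹ : (LaurentSeries R)ˣ) : LaurentSeries R) ∈ psRange R :=
    hsim.inv.factor_mem (Jt_mem_matrix n)
      (mem_matrix_of_matLat_stdLat_le (glLat_inv_eq hstab).le) (Jt_first_last hn)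
  obtain ⟨y, hy⟩ := exists_units_eq_mul_self h2 hsq hcu hcu'
  set x : (LaurentSeries R)ˣ := Units.map (algebraMap (PowerSeries R) (LaurentSeries R)) y
  have hxc : ((x⁻¹ : (LaurentSeries R)ˣ) : LaurentSeries R) * (x⁻¹ : (LaurentSeries R)ˣ) * c =
      1 := by
    simp [hy, ← mul_assoc]
  have hsymp := hsim.smul ((x⁻¹ : (LaurentSeries R)ˣ) : LaurentSeries R)
  rw [hxc, IsSimilitude, one_smul] at hsymp
  exact ⟨⟨hcu, hcu'⟩, x, ⟨⟨y, rfl⟩, ⟨(y⁻¹ : (PowerSeries R)ˣ), rfl⟩⟩, hsymp,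
    fun L => matLat_unit_smul y⁻¹ _ L⟩

open Pap Matrix in
/-- `I_GSp(F) = F[[u]]^× · I_Sp(F)`: a symplectic similitude stabilizing the standard chain has
similitude factor in `F[[u]]^×` and is a `F[[u]]^×`-multiple of a symplectic matrix stabilizing
the standard chain. -/
theorem stmt9 (F : Type*) [Field F] [IsAlgClosed F] (hchar : (2 : F) ≠ 0)
    (n : ℕ) (hn : 1 ≤ n) (g : GL (Fin (2 * n)) (LaurentSeries F)) (c : (LaurentSeries F)ˣ)
    (hc : (g : Matrix (Fin (2 * n)) (Fin (2 * n)) (LaurentSeries F))ᵀ * Jt F n *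
        (g : Matrix (Fin (2 * n)) (Fin (2 * n)) (LaurentSeries F))
      = (c : LaurentSeries F) • Jt F n)
    (hstab : ∀ i : ℤ, glLat F (2 * n) g (stdChain F (2 * n) i) = stdChain F (2 * n) i) :
    ((c : LaurentSeries F) ∈ psRange F ∧
      ((c⁻¹ : (LaurentSeries F)ˣ) : LaurentSeries F) ∈ psRange F) ∧
    ∃ x : (LaurentSeries F)ˣ,
      ((x : LaurentSeries F) ∈ psRange F ∧
        ((x⁻¹ : (LaurentSeries F)ˣ) : LaurentSeries F) ∈ psRange F) ∧
      (((x⁻¹ : (LaurentSeries F)ˣ) : LaurentSeries F) •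
            (g : Matrix (Fin (2 * n)) (Fin (2 * n)) (LaurentSeries F)))ᵀ * Jt F n *
          (((x⁻¹ : (LaurentSeries F)ˣ) : LaurentSeries F) •
            (g : Matrix (Fin (2 * n)) (Fin (2 * n)) (LaurentSeries F)))
        = Jt F n ∧
      ∀ i : ℤ,
        matLat F (2 * n)
          (((x⁻¹ : (LaurentSeries F)ˣ) : LaurentSeries F) •
            (g : Matrix (Fin (2 * n)) (Fin (2 * n)) (LaurentSeries F)))
          (stdChain F (2 * n) i) = stdChain F (2 * n) i := by
  obtain ⟨hcu, x, hx, hsymp, hL⟩ := stmt9_general F hchar.isUnit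
    (fun a _ => IsAlgClosed.exists_eq_mul_self a) n hn g c hc (hstab 0)
  exact ⟨hcu, x, hx, hsymp, fun i => (hL _).trans (hstab i)⟩
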